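/- arXiv:1003.2170 — 2 statements merged into one kernel-verified Lean document; each statement's English description precedes it below -/
import Mathlib

section
/- With α = ln(1+√2), one has Li₂(√2 − 1) − Li₂(1 − √2) = α²/2 − π²/8 + π²/4 − ln²(√2 − 1). -/
/-- The real dilogarithm Li₂(w) = ∑_{k=1}^∞ w^k/k², for |w| ≤ 1. -/
noncomputable def Li2 (w : ℝ) : ℝ := ∑' k : ℕ, w ^ (k + 1) / ((k : ℝ) + 1) ^ 2

open Filter Topology in
theorem li2_hasDerivAt {x : ℝ} (hx : |x| < 1) (h0 : x ≠ 0) :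
    HasDerivAt Li2 (-Real.log (1 - x) / x) x := by
  obtain ⟨r, hr, hr1⟩ := exists_between hx
  have hr0 : 0 ≤ r := (abs_nonneg x).trans hr.le
  have h := hasDerivAt_tsum_of_isPreconnected (𝕜 := ℝ) (F := ℝ)
    (g := fun (k : ℕ) (w : ℝ) => w ^ (k + 1) / ((k : ℝ) + 1) ^ 2)
    (g' := fun (k : ℕ) (w : ℝ) => w ^ k / ((k : ℝ) + 1))
    (u := fun k => r ^ k) (t := Set.Ioo (-r) r) (y₀ := 0) (y := x)
    (summable_geometric_of_lt_one hr0 hr1) isOpen_Ioo isPreconnected_Ioo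
    ?_ ?_ ?_ ?_ ?_
  · have hs := (Real.hasSum_pow_div_log_of_abs_lt_one hx).div_const x
    have : (∑' k : ℕ, x ^ k / ((k : ℝ) + 1)) = -Real.log (1 - x) / x := by
      rw [← hs.tsum_eq]
      congr 1; ext k
      have : (k : ℝ) + 1 ≠ 0 := by positivity
      field_simp
      try ring
    rw [← this]
    exact h
  · intro k y _
    have h1 : (k : ℝ) + 1 ≠ 0 := by positivity
    have := (hasDerivAt_pow (k + 1) y).div_const (((k : ℝ) + 1) ^ 2)
    refine this.congr_deriv ?_
    push_cast
    field_simp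
  · intro k y hy
    have hy' : |y| ≤ r := (abs_lt.mpr hy).le
    rw [Real.norm_eq_abs, abs_div, abs_pow, abs_of_pos (by positivity : (0 : ℝ) < (k : ℝ) + 1)]
    apply (div_le_self (by positivity) (by linarith [(Nat.cast_nonneg k : (0 : ℝ) ≤ k)])).trans
    gcongr
  · have := (abs_nonneg x).trans_lt hr
    constructor <;> linarith
  · simp
  · exact abs_lt.mp hr

theorem li2_summable_bound : Summable (fun k : ℕ => 1 / ((k : ℝ) + 1) ^ 2) := by
  have := (summable_nat_add_iff 1).mpr hasSum_zeta_two.summable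
  simpa using this

theorem li2_cont : ContinuousOn Li2 (Set.Icc (-1) 1) := by
  unfold Li2
  refine continuousOn_tsum (u := fun k : ℕ => 1 / ((k : ℝ) + 1) ^ 2) ?_ li2_summable_bound ?_
  · intro k; fun_prop
  · intro k x hx
    rw [Real.norm_eq_abs, abs_div, abs_pow, abs_of_pos (by positivity : (0 : ℝ) < ((k : ℝ) + 1) ^ 2)]
    gcongr
    exact pow_le_one₀ (abs_nonneg x) (abs_le.mpr hx)

theorem li2_zero : Li2 0 = 0 := by simp [Li2]

theorem li2_one_sub : Li2 1 - Li2 (-1) = Real.pi ^ 2 / 4 := by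
  have hz := hasSum_zeta_two
  have h1 : Li2 1 = Real.pi ^ 2 / 6 := by
    have := (hasSum_nat_add_iff' 1).mpr hz
    simp at this
    simp only [Li2, one_pow]
    simpa using this.tsum_eq
  have he : HasSum (fun k : ℕ => (1 : ℝ) / ((2 * k : ℕ) : ℝ) ^ 2) (Real.pi ^ 2 / 24) := by
    convert! hz.div_const 4 using 1
    · ext k; push_cast; rw [mul_pow, div_div]; ring_nf
    · ring
  have hos : Summable (fun k : ℕ => (1 : ℝ) / ((2 * k + 1 : ℕ) : ℝ) ^ 2) :=
    hz.summable.comp_injective (i := fun k : ℕ => 2 * k + 1) (fun a b h => by simpa using h)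
  have ho := hos.hasSum
  have hv := (HasSum.even_add_odd (f := fun n : ℕ => (1 : ℝ) / (n : ℝ) ^ 2) he ho).unique hz
  have hm : HasSum (fun n : ℕ => (-1 : ℝ) ^ n / (n : ℝ) ^ 2)
      (Real.pi ^ 2 / 24 + -(∑' k : ℕ, (1 : ℝ) / ((2 * k + 1 : ℕ) : ℝ) ^ 2)) := by
    apply HasSum.even_add_odd
    · convert! he using 2 with k
      simp
    · convert! ho.neg using 2 with k
      simp [pow_succ, neg_div]
  have h3 := (hasSum_nat_add_iff' 1).mpr hm
  simp only [Nat.cast_add, Nat.cast_one] at h3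
  have h2 := h3.tsum_eq
  change Li2 (-1) = _ at h2
  rw [h1, h2]
  simp only [Finset.range_one, Finset.sum_singleton]
  norm_num
  norm_num at hv
  linarith

noncomputable def auxD (x : ℝ) : ℝ := Li2 x - Li2 (-x)

theorem auxD_deriv {x : ℝ} (h0 : 0 < x) (h1 : x < 1) :
    HasDerivAt auxD ((Real.log (1 + x) - Real.log (1 - x)) / x) x := by
  have ha := li2_hasDerivAt (x := x) (by rw [abs_of_pos h0]; exact h1) h0.ne'
  have hb := li2_hasDerivAt (x := -x) (by rw [abs_neg, abs_of_pos h0]; exact h1)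
    (neg_ne_zero.mpr h0.ne')
  have hc := hb.comp x (hasDerivAt_neg x)
  refine (ha.sub hc).congr_deriv ?_
  rw [sub_neg_eq_add]
  field_simp
  ring

theorem auxD_cont : ContinuousOn auxD (Set.Icc (-1) 1) := by
  apply li2_cont.sub
  apply li2_cont.comp continuousOn_neg
  intro x hx
  constructor <;> linarith [hx.1, hx.2]

noncomputable def auxF (x : ℝ) : ℝ :=
  auxD x + auxD ((1 - x) / (1 + x)) - Real.log x * (Real.log (1 + x) - Real.log (1 - x))

theorem auxF_deriv {x : ℝ} (h0 : 0 < x) (h1 : x < 1) : HasDerivAt auxF 0 x := by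
  have p1 : 0 < 1 + x := by linarith
  have p2 : 0 < 1 - x := by linarith
  have hp : HasDerivAt (fun x : ℝ => 1 + x) 1 x := (hasDerivAt_id x).const_add 1
  have hm : HasDerivAt (fun x : ℝ => 1 - x) (-1) x := (hasDerivAt_id x).const_sub 1
  have hq := hm.div hp p1.ne'
  have hy0 : 0 < (1 - x) / (1 + x) := by positivity
  have hy1 : (1 - x) / (1 + x) < 1 := by rw [div_lt_one p1]; linarith
  have hD := HasDerivAt.comp x (auxD_deriv hy0 hy1) hq
  have hL := (Real.hasDerivAt_log h0.ne').mul ((hp.log p1.ne').sub (hm.log p2.ne'))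
  have hF := ((auxD_deriv h0 h1).add hD).sub hL
  refine hF.congr_deriv ?_
  have e1 : 1 + (1 - x) / (1 + x) = 2 / (1 + x) := by field_simp; ring
  have e2 : 1 - (1 - x) / (1 + x) = 2 * x / (1 + x) := by field_simp; ring
  simp only [Pi.sub_apply, Pi.div_apply]
  rw [e1, e2, Real.log_div (by norm_num) p1.ne', Real.log_div (by positivity) p1.ne',
    Real.log_mul (by norm_num) h0.ne']
  field_simp
  ring

open Filter Topology in
theorem auxF_lim : Tendsto auxF (𝓝[>] 0) (𝓝 (Real.pi ^ 2 / 4)) := by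
  have hsub : Set.Ioo (0 : ℝ) 1 ∈ 𝓝[>] (0 : ℝ) := Ioo_mem_nhdsGT one_pos
  have t1 : Tendsto auxD (𝓝[>] 0) (𝓝 0) := by
    have : ContinuousAt auxD 0 := auxD_cont.continuousAt (Icc_mem_nhds (by norm_num) (by norm_num))
    have h := this.tendsto.mono_left (nhdsWithin_le_nhds (s := Set.Ioi 0))
    simpa [auxD] using h
  have t2 : Tendsto (fun x : ℝ => auxD ((1 - x) / (1 + x))) (𝓝[>] 0) (𝓝 (Real.pi ^ 2 / 4)) := by
    have hc := auxD_cont 1 (by norm_num)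
    have : auxD 1 = Real.pi ^ 2 / 4 := li2_one_sub
    rw [← this]
    apply hc.tendsto.comp
    apply tendsto_nhdsWithin_iff.mpr
    constructor
    · have : ContinuousAt (fun x : ℝ => (1 - x) / (1 + x)) 0 := by
        apply ContinuousAt.div <;> first | fun_prop | norm_num
      have h := this.tendsto.mono_left (nhdsWithin_le_nhds (s := Set.Ioi 0))
      simpa using h
    · filter_upwards [hsub] with x hx
      have p1 : 0 < 1 + x := by linarith [hx.1]
      have p2 : 0 < 1 - x := by linarith [hx.2]
      have hy0 : 0 < (1 - x) / (1 + x) := by positivity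
      refine ⟨by linarith, ?_⟩
      rw [div_le_one p1]; linarith [hx.1]
  have t3 : Tendsto (fun x : ℝ => Real.log x * (Real.log (1 + x) - Real.log (1 - x)))
      (𝓝[>] 0) (𝓝 0) := by
    have hp : HasDerivAt (fun x : ℝ => 1 + x) 1 0 := (hasDerivAt_id 0).const_add 1
    have hm : HasDerivAt (fun x : ℝ => 1 - x) (-1) 0 := (hasDerivAt_id 0).const_sub 1
    have hL := (hp.log (by norm_num)).sub (hm.log (by norm_num))
    have hs := (hasDerivAt_iff_tendsto_slope.mp hL).mono_left
      (nhdsWithin_mono 0 (fun x (hx : 0 < x) => hx.ne') : 𝓝[>] (0 : ℝ) ≤ _)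
    have h0 := tendsto_log_mul_rpow_nhdsGT_zero (r := 1) one_pos
    simp only [Real.rpow_one] at h0
    have := h0.mul hs
    rw [zero_mul] at this
    refine this.congr' ?_
    filter_upwards [hsub] with x hx
    have := hx.1.ne'
    simp [slope_def_field]
    field_simp
  have := (t1.add t2).sub t3
  simpa [auxF, Function.comp_def] using this.congr (fun x => (rfl : _ = auxF x))

open Filter Topology in
theorem auxF_const {x : ℝ} (h0 : 0 < x) (h1 : x < 1) : auxF x = Real.pi ^ 2 / 4 := by
  have hc : ∀ y ∈ Set.Ioo (0 : ℝ) 1, auxF y = auxF x := by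
    intro y hy
    exact isOpen_Ioo.is_const_of_deriv_eq_zero isPreconnected_Ioo
      (fun z hz => (auxF_deriv hz.1 hz.2).differentiableAt.differentiableWithinAt)
      (fun z hz => (auxF_deriv hz.1 hz.2).deriv) hy ⟨h0, h1⟩
  refine tendsto_nhds_unique (tendsto_const_nhds.congr' ?_) auxF_lim
  filter_upwards [Ioo_mem_nhdsGT one_pos] with y hy using (hc y hy).symm

/-- With α = ln(1+√2), Li₂(√2 − 1) − Li₂(1 − √2) = α²/2 − π²/8 + π²/4 − ln²(√2 − 1). -/
theorem dilog_difference_identity :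
    Li2 (Real.sqrt 2 - 1) - Li2 (1 - Real.sqrt 2) =
      Real.log (1 + Real.sqrt 2) ^ 2 / 2 - Real.pi ^ 2 / 8 + Real.pi ^ 2 / 4
        - Real.log (Real.sqrt 2 - 1) ^ 2 := by
  have hs : Real.sqrt 2 * Real.sqrt 2 = 2 := Real.mul_self_sqrt (by norm_num)
  have hs0 : 0 ≤ Real.sqrt 2 := Real.sqrt_nonneg 2
  have hs1 : 1 < Real.sqrt 2 := by nlinarith
  have hs2 : Real.sqrt 2 < 2 := by nlinarith
  have h := auxF_const (x := Real.sqrt 2 - 1) (by linarith) (by linarith)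
  have e1 : (1 - (Real.sqrt 2 - 1)) / (1 + (Real.sqrt 2 - 1)) = Real.sqrt 2 - 1 := by
    rw [div_eq_iff (by linarith)]; linarith
  have e2 : Real.log (1 + (Real.sqrt 2 - 1)) - Real.log (1 - (Real.sqrt 2 - 1))
      = - Real.log (Real.sqrt 2 - 1) := by
    rw [← Real.log_div (by linarith) (by linarith), ← Real.log_inv, ← e1, inv_div]
    simp only [e1]
  have e3 : Real.log (1 + Real.sqrt 2) = - Real.log (Real.sqrt 2 - 1) := by
    rw [← Real.log_inv]
    congr 1
    apply eq_inv_of_mul_eq_one_left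
    linarith
  unfold auxF auxD at h
  rw [e1, e2, neg_sub] at h
  rw [e3]
  linarith
end

section
/- For all real x, y with 0 ≤ x < 1 and 0 ≤ y < 1, the point (u, v) with u = arcosh(√((1 + x²)/(1 − x²y²))) and v = arcosh(√((1 + y²)/(1 − x²y²))) satisfies x = sinh u / cosh v and y = sinh v / cosh u. -/
/-- The inverse hyperbolic cosine on [1, ∞): arcosh t = ln (t + √(t² − 1)). -/
noncomputable def arcosh (t : ℝ) : ℝ := Real.log (t + Real.sqrt (t ^ 2 - 1))

theorem half_change (x y : ℝ) (hx0 : 0 ≤ x) (hx1 : x < 1)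
    (hy0 : 0 ≤ y) (hy1 : y < 1) :
    x = Real.sinh (arcosh (Real.sqrt ((1 + x ^ 2) / (1 - x ^ 2 * y ^ 2)))) /
          Real.cosh (arcosh (Real.sqrt ((1 + y ^ 2) / (1 - x ^ 2 * y ^ 2)))) := by
  have hxy : x * y < 1 := by nlinarith
  have hxy0 : 0 ≤ x * y := mul_nonneg hx0 hy0
  have hD : 0 < 1 - x ^ 2 * y ^ 2 := by nlinarith
  have hA : 1 ≤ (1 + x ^ 2) / (1 - x ^ 2 * y ^ 2) := by
    rw [le_div_iff₀ hD]; nlinarith [sq_nonneg x, sq_nonneg (x * y)]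
  have hB : 1 ≤ (1 + y ^ 2) / (1 - x ^ 2 * y ^ 2) := by
    rw [le_div_iff₀ hD]; nlinarith [sq_nonneg y, sq_nonneg (x * y)]
  have e : ∀ t, arcosh t = Real.arcosh t := fun _ => rfl
  rw [e, e, Real.sinh_arcosh (Real.one_le_sqrt.2 hA), Real.cosh_arcosh (Real.one_le_sqrt.2 hB),
    Real.sq_sqrt (by linarith)]
  have hs : (1 + x ^ 2) / (1 - x ^ 2 * y ^ 2) - 1
      = x ^ 2 * ((1 + y ^ 2) / (1 - x ^ 2 * y ^ 2)) := by
    have := hD.ne'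
    rw [div_sub_one this, ← mul_div_assoc]
    congr 1
    ring
  rw [hs, Real.sqrt_mul (sq_nonneg x), Real.sqrt_sq hx0, mul_div_assoc, div_self, mul_one]
  exact (Real.sqrt_pos.2 (by linarith)).ne'

/-- For 0 ≤ x < 1 and 0 ≤ y < 1, the point (u, v) with
u = arcosh √((1 + x²)/(1 − x²y²)) and v = arcosh √((1 + y²)/(1 − x²y²))
satisfies x = sinh u / cosh v and y = sinh v / cosh u. -/
theorem inverse_hyperbolic_change (x y : ℝ) (hx0 : 0 ≤ x) (hx1 : x < 1)
    (hy0 : 0 ≤ y) (hy1 : y < 1) :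
    x = Real.sinh (arcosh (Real.sqrt ((1 + x ^ 2) / (1 - x ^ 2 * y ^ 2)))) /
          Real.cosh (arcosh (Real.sqrt ((1 + y ^ 2) / (1 - x ^ 2 * y ^ 2)))) ∧
    y = Real.sinh (arcosh (Real.sqrt ((1 + y ^ 2) / (1 - x ^ 2 * y ^ 2)))) /
          Real.cosh (arcosh (Real.sqrt ((1 + x ^ 2) / (1 - x ^ 2 * y ^ 2)))) := by
  refine ⟨half_change x y hx0 hx1 hy0 hy1, ?_⟩
  have h := half_change y x hy0 hy1 hx0 hx1
  rwa [mul_comm (y ^ 2) (x ^ 2)] at h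
end
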